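/- Let g be a Riemannian metric and π a symmetric 2-tensor on a 3-manifold, and let h, ϖ be symmetric 2-tensors. Then the linearizations of H and M at (g,π) in direction (h,ϖ), i.e. the derivatives at s = 0 of s ↦ H(g+sh, π+sϖ) and s ↦ M(g+sh, π+sϖ), are given by: DH[g,π](h,ϖ) = −Δ_g tr_g h + D^i D^j h_{ij} − h^{ij} Ric(g)_{ij} + (tr_g π)(tr_g ϖ − π^{ij} h_{ij}) − 2 π^{ij} ϖ_{ij} + 2 h^{ij} g^{kℓ} π_{ik} π_{jℓ}, and DM[g,π](h,ϖ)_i = (div_g ϖ)_i − h^{kℓ} D_k π_{ℓi} − π_i^j g^{kℓ}( D_k h_{ℓj} − ½ D_j h_{kℓ} ) − ½ π^{kℓ} D_i h_{kℓ}, where D is the Levi-Civita covariant derivative of g, Ric(g) its Ricci tensor, and all indices are raised with g. -/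

import Mathlib

noncomputable section

open MeasureTheory Finset

/-! ## Basic geometry on the exterior region of `ℝ³` -/

abbrev Vec : Type := Fin 3 → ℝ
abbrev Mtx : Type := Fin 3 → Fin 3 → ℝ

/-- Coordinate partial derivative. -/
def pd (i : Fin 3) (f : Vec → ℝ) (x : Vec) : ℝ := fderiv ℝ f x (Pi.single i 1)

/-- Euclidean radius `r`. -/
def rad (x : Vec) : ℝ := Real.sqrt (x 0 ^ 2 + x 1 ^ 2 + x 2 ^ 2)

/-- The manifold `Σ = {r ≥ r₀}`. -/
def Sig (r₀ : ℝ) : Set Vec := {x | r₀ ≤ rad x}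

/-- Its boundary `∂Σ = {r = r₀}`. -/
def bdry (r₀ : ℝ) : Set Vec := {x | rad x = r₀}

/-- The identity (Euclidean) matrix. -/
def idMtx : Mtx := fun i j => if i = j then 1 else 0

/-- Inverse matrix. -/
def minv (A : Mtx) : Mtx := fun i j => (Matrix.of A)⁻¹ i j

/-- Volume density `√(det g)`. -/
def dens (g : Vec → Mtx) (x : Vec) : ℝ := Real.sqrt (Matrix.det (Matrix.of (g x)))

/-- Asymptotically flat initial data set on `Σ = {r ≥ r₀}` (Definition 2.1). -/
structure AFData (r₀ : ℝ) : Type where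
  g : Vec → Mtx
  pi : Vec → Mtx
  g_smooth : ContDiff ℝ (⊤ : ℕ∞) g
  pi_smooth : ContDiff ℝ (⊤ : ℕ∞) pi
  g_symm : ∀ x i j, g x i j = g x j i
  pi_symm : ∀ x i j, pi x i j = pi x j i
  g_posdef : ∀ x ∈ Sig r₀, (Matrix.of (g x)).PosDef
  decay : ∀ k : ℕ, ∃ C : ℝ, ∀ x ∈ Sig r₀,
      rad x ^ (k + 1) * ‖iteratedFDeriv ℝ k (fun y => g y - idMtx) x‖
        + rad x ^ (k + 2) * ‖iteratedFDeriv ℝ k pi x‖ ≤ C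

/-! ## Curvature and constraint operators, in coordinates -/

/-- Christoffel symbols `Γ^k_{ij}` of `g`. -/
def Gam (g : Vec → Mtx) (k i j : Fin 3) (x : Vec) : ℝ :=
  (1 / 2) * ∑ l, minv (g x) k l *
    (pd i (fun y => g y l j) x + pd j (fun y => g y l i) x - pd l (fun y => g y i j) x)

/-- Ricci curvature `Ric(g)_{ij}`. -/
def RicT (g : Vec → Mtx) (i j : Fin 3) (x : Vec) : ℝ :=
  (∑ k, pd k (fun y => Gam g k i j y) x) - (∑ k, pd j (fun y => Gam g k k i y) x)
    + ∑ k, ∑ l, (Gam g k k l x * Gam g l i j x - Gam g k j l x * Gam g l k i x)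

/-- Scalar curvature `R(g)`. -/
def scalR (g : Vec → Mtx) (x : Vec) : ℝ := ∑ i, ∑ j, minv (g x) i j * RicT g i j x

/-- Trace `tr_g T` of a 2-tensor. -/
def trT (g T : Vec → Mtx) (x : Vec) : ℝ := ∑ i, ∑ j, minv (g x) i j * T x i j

/-- `|T|²_g`. -/
def normSqT (g T : Vec → Mtx) (x : Vec) : ℝ :=
  ∑ i, ∑ j, ∑ k, ∑ l, minv (g x) i k * minv (g x) j l * T x i j * T x k l

/-- Covariant derivative `D_k T_{ij}` of a 2-tensor. -/
def covD (g T : Vec → Mtx) (k i j : Fin 3) (x : Vec) : ℝ :=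
  pd k (fun y => T y i j) x - ∑ l, (Gam g l k i x * T x l j + Gam g l k j x * T x i l)

/-- Divergence `(div_g T)_i = g^{kl} D_k T_{li}`. -/
def divT (g T : Vec → Mtx) (i : Fin 3) (x : Vec) : ℝ :=
  ∑ k, ∑ l, minv (g x) k l * covD g T k l i x

/-- Hamiltonian constraint `H(g,π) = R(g) + ½ (tr_g π)² - |π|²_g`. -/
def Hc (g p : Vec → Mtx) (x : Vec) : ℝ := scalR g x + (1 / 2) * (trT g p x) ^ 2 - normSqT g p x

/-- The vacuum constraint equations on `Σ`. -/
def VacuumConstraints (g p : Vec → Mtx) (r₀ : ℝ) : Prop :=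
  ∀ x ∈ Sig r₀, Hc g p x = 0 ∧ ∀ i, divT g p i x = 0

/-- Lie derivative `(ℒ_X g)_{ij}`. -/
def lieG (g : Vec → Mtx) (X : Vec → Vec) (x : Vec) : Mtx := fun i j =>
  ∑ k, (X x k * pd k (fun y => g y i j) x
    + g x k j * pd i (fun y => X y k) x + g x i k * pd j (fun y => X y k) x)

/-- Divergence of a vector field, `div_g X = D_i X^i`. -/
def divX (g : Vec → Mtx) (X : Vec → Vec) (x : Vec) : ℝ :=
  (∑ i, pd i (fun y => X y i) x) + ∑ i, ∑ k, Gam g i i k x * X x k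

/-- Modified Lie derivative `L_g X = ℒ_X g - (div_g X) g`. -/
def Lmod (g : Vec → Mtx) (X : Vec → Vec) (x : Vec) : Mtx := fun i j =>
  lieG g X x i j - divX g X x * g x i j

/-- Laplace–Beltrami operator on scalars. -/
def lapl (g : Vec → Mtx) (u : Vec → ℝ) (x : Vec) : ℝ :=
  ∑ i, ∑ j, minv (g x) i j * (pd i (fun y => pd j u y) x - ∑ k, Gam g k i j x * pd k u x)

/-- Raising both indices of a 2-tensor: `T^{ij}`. -/
def raise2 (g T : Vec → Mtx) (x : Vec) (i j : Fin 3) : ℝ :=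
  ∑ a, ∑ b, minv (g x) i a * minv (g x) j b * T x a b

/-! ## The elliptic operator `P`, its formal adjoint and boundary operators -/

/-- Pairs `𝕌 = (u, X)` of a scalar function and a vector field. -/
abbrev PairF : Type := (Vec → ℝ) × (Vec → Vec)

/-- The operator `P` of (4.1). -/
def Pop (g p : Vec → Mtx) (U : PairF) : PairF :=
  (fun x => -8 * lapl g U.1 x - 2 * (∑ i, ∑ j, raise2 g p x i j * lieG g U.2 x i j)
      + trT g p x * divX g U.2 x,
   fun x i => -2 * divT g (Lmod g U.2) i x
      - 8 * (∑ j, ∑ l, minv (g x) j l * p x i l * pd j U.1 x)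
      + 4 * trT g p x * pd i U.1 x)

/-- The operator `P^*`. -/
def PopStar (g p : Vec → Mtx) (U : PairF) : PairF :=
  (fun x => -8 * lapl g U.1 x + 4 * (∑ i, ∑ j, raise2 g p x i j * lieG g U.2 x i j)
      - 4 * divX g (fun y k => trT g p y * U.2 y k) x,
   fun x i => -2 * divT g (Lmod g U.2) i x
      + 4 * (∑ j, ∑ l, minv (g x) j l * p x i l * pd j U.1 x)
      - pd i (fun y => trT g p y * U.1 y) x)

/-- The inward (with respect to `Σ`) unit normal `ν` of `∂Σ` for `g`. -/
def nuV (g : Vec → Mtx) (x : Vec) : Vec := fun i =>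
  (∑ j, minv (g x) i j * x j) /
    Real.sqrt (∑ i, ∑ j, minv (g x) i j * x i * x j)

/-- Normal derivative `∂_ν u`. -/
def dnu (g : Vec → Mtx) (u : Vec → ℝ) (x : Vec) : ℝ := ∑ i, nuV g x i * pd i u x

/-- `g(X, ν)`. -/
def gXnu (g : Vec → Mtx) (X : Vec → Vec) (x : Vec) : ℝ :=
  ∑ i, ∑ j, g x i j * X x i * nuV g x j

/-- `π(X, ν)`. -/
def piXnu (g p : Vec → Mtx) (X : Vec → Vec) (x : Vec) : ℝ :=
  ∑ i, ∑ j, p x i j * X x i * nuV g x j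

/-- Covariant derivative `D_ν X`. -/
def covDnuX (g : Vec → Mtx) (X : Vec → Vec) (x : Vec) : Vec := fun i =>
  ∑ k, nuV g x k * (pd k (fun y => X y i) x + ∑ l, Gam g i k l x * X x l)

/-- The boundary operator `B_ν`. -/
def Bnu (g p : Vec → Mtx) (U : PairF) : PairF :=
  (fun x => -8 * dnu g U.1 x + trT g p x * gXnu g U.2 x - 4 * piXnu g p U.2 x,
   fun x i => -2 * covDnuX g U.2 x i)

/-- The boundary operator `B_ν^*`. -/
def BnuStar (g p : Vec → Mtx) (U : PairF) : PairF :=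
  (fun x => -8 * dnu g U.1 x - 4 * trT g p x * gXnu g U.2 x + 8 * piXnu g p U.2 x,
   fun x i => -2 * covDnuX g U.2 x i)

/-! ## The class `ℰ(∂Σ)` of boundary perturbations -/

/-- An element `F = (b, ω, Z, ξ)` of `ℰ(∂Σ)`. -/
structure EBdry : Type where
  b : Vec → ℝ
  om : Vec → Vec
  Z : Vec → Vec
  xi : Vec → Mtx

/-- Smoothness of an element of `ℰ(∂Σ)`. -/
def EBdry.Smooth (F : EBdry) : Prop :=
  ContDiff ℝ (⊤ : ℕ∞) F.b ∧ ContDiff ℝ (⊤ : ℕ∞) F.om ∧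
    ContDiff ℝ (⊤ : ℕ∞) F.Z ∧ ContDiff ℝ (⊤ : ℕ∞) F.xi

/-- Action of `F ∈ ℰ(∂Σ)` on pairs. -/
def EBdry.app (F : EBdry) (U : PairF) : PairF :=
  (fun x => F.b x * U.1 x + ∑ i, F.om x i * U.2 x i,
   fun x i => U.1 x * F.Z x i + ∑ j, F.xi x i j * U.2 x j)

/-- The transpose `F^* = (b, Z^♭, ω^♯, ξ^♮)`. -/
def EBdry.star (g : Vec → Mtx) (F : EBdry) : EBdry where
  b := F.b
  om := fun x i => ∑ j, g x i j * F.Z x j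
  Z := fun x i => ∑ j, minv (g x) i j * F.om x j
  xi := fun x i j => ∑ l, ∑ k, minv (g x) j l * F.xi x l k * g x k i

/-- The identity element `Id ∈ ℰ(∂Σ)`. -/
def EBdry.id : EBdry where
  b := fun _ => 1
  om := fun _ _ => 0
  Z := fun _ _ => 0
  xi := fun _ => idMtx

/-- The boundary operator `B_ν + F`. -/
def PBC (g p : Vec → Mtx) (F : EBdry) (U : PairF) : PairF := Bnu g p U + F.app U

/-- The boundary operator `B_ν^* + F^*`. -/
def PBCStar (g p : Vec → Mtx) (F : EBdry) (U : PairF) : PairF :=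
  BnuStar g p U + (F.star g).app U

/-! ## Weighted Sobolev spaces -/

/-- Integrand of the weighted Sobolev seminorm of order `n` and weight `δ`. -/
def wIntegrand {E : Type} [NormedAddCommGroup E] [NormedSpace ℝ E]
    (g : Vec → Mtx) (n : ℕ) (δ : ℝ) (f : Vec → E) (x : Vec) : ℝ :=
  ((1 + rad x) ^ (-δ - 3 / 2 + (n : ℝ)) * ‖iteratedFDeriv ℝ n f x‖) ^ 2 * dens g x

/-- Membership in `H^k_δ(Σ)`. -/
def MemW {E : Type} [NormedAddCommGroup E] [NormedSpace ℝ E]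
    (g : Vec → Mtx) (r₀ : ℝ) (k : ℕ) (δ : ℝ) (f : Vec → E) : Prop :=
  ∀ n ≤ k, IntegrableOn (wIntegrand g n δ f) (Sig r₀) volume

/-- The `H^k_δ(Σ)` norm. -/
def wNorm {E : Type} [NormedAddCommGroup E] [NormedSpace ℝ E]
    (g : Vec → Mtx) (r₀ : ℝ) (k : ℕ) (δ : ℝ) (f : Vec → E) : ℝ :=
  ∑ n ∈ Finset.range (k + 1), Real.sqrt (∫ x in Sig r₀, wIntegrand g n δ f x)

/-- Membership of a pair in `H^k_δ(Σ)`. -/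
def MemWPair (g : Vec → Mtx) (r₀ : ℝ) (k : ℕ) (δ : ℝ) (U : PairF) : Prop :=
  MemW g r₀ k δ U.1 ∧ MemW g r₀ k δ U.2

/-- The `H^k_δ(Σ)` norm of a pair. -/
def wNormPair (g : Vec → Mtx) (r₀ : ℝ) (k : ℕ) (δ : ℝ) (U : PairF) : ℝ :=
  wNorm g r₀ k δ U.1 + wNorm g r₀ k δ U.2

/-- Pointwise inner product `𝕌·𝕍 = uv + g(X,Y)` of two pairs. -/
def dotPair (g : Vec → Mtx) (U V : PairF) (x : Vec) : ℝ :=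
  U.1 x * V.1 x + ∑ i, ∑ j, g x i j * U.2 x i * V.2 x j

/-- `L²(Σ)` inner product of pairs (with respect to the volume form of `g`). -/
def L2inner (g : Vec → Mtx) (r₀ : ℝ) (U V : PairF) : ℝ :=
  ∫ x in Sig r₀, dotPair g U V x * dens g x

/-! ## Boundary integrals and boundary Sobolev norms -/

/-- Spherical parametrization of the sphere of radius `r`. -/
def sphPt (r θ φ : ℝ) : Vec :=
  ![r * Real.sin θ * Real.cos φ, r * Real.sin θ * Real.sin φ, r * Real.cos θ]

def sphTh (r θ φ : ℝ) : Vec :=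
  ![r * Real.cos θ * Real.cos φ, r * Real.cos θ * Real.sin φ, -(r * Real.sin θ)]

def sphPh (r θ φ : ℝ) : Vec :=
  ![-(r * Real.sin θ * Real.sin φ), r * Real.sin θ * Real.cos φ, 0]

/-- Value of the metric on two vectors. -/
def gOf (g : Vec → Mtx) (x v w : Vec) : ℝ := ∑ i, ∑ j, g x i j * v i * w j

/-- Area density of the metric induced by `g` on `∂Σ`. -/
def bdryDens (g : Vec → Mtx) (r₀ θ φ : ℝ) : ℝ :=
  Real.sqrt (gOf g (sphPt r₀ θ φ) (sphTh r₀ θ φ) (sphTh r₀ θ φ)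
      * gOf g (sphPt r₀ θ φ) (sphPh r₀ θ φ) (sphPh r₀ θ φ)
    - gOf g (sphPt r₀ θ φ) (sphTh r₀ θ φ) (sphPh r₀ θ φ) ^ 2)

/-- Integral over `∂Σ` with respect to the area measure induced by `g`. -/
def bdryIntegral (g : Vec → Mtx) (r₀ : ℝ) (f : Vec → ℝ) : ℝ :=
  ∫ θ in (0 : ℝ)..Real.pi, ∫ φ in (0 : ℝ)..(2 * Real.pi),
    f (sphPt r₀ θ φ) * bdryDens g r₀ θ φ

/-- A fixed collar neighbourhood of `∂Σ` in `Σ`. -/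
def annulus (r₀ : ℝ) : Set Vec := {x | r₀ ≤ rad x ∧ rad x ≤ r₀ + 1}

/-- The `H¹` norm on the collar, used to define the trace norm. -/
def H1AnnNorm {E : Type} [NormedAddCommGroup E] [NormedSpace ℝ E]
    (r₀ : ℝ) (u : Vec → E) : ℝ :=
  Real.sqrt (∫ x in annulus r₀, (‖u x‖ ^ 2 + ‖fderiv ℝ u x‖ ^ 2))

/-- Membership in the trace space `H^{1/2}(∂Σ)`. -/
def MemHHalf {E : Type} [NormedAddCommGroup E] [NormedSpace ℝ E]
    (r₀ : ℝ) (h : Vec → E) : Prop :=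
  ∃ u : Vec → E, (∀ x ∈ bdry r₀, u x = h x) ∧
    IntegrableOn (fun x => ‖u x‖ ^ 2 + ‖fderiv ℝ u x‖ ^ 2) (annulus r₀) volume

/-- The `H^{1/2}(∂Σ)` (trace) norm. -/
def hHalfNorm {E : Type} [NormedAddCommGroup E] [NormedSpace ℝ E]
    (r₀ : ℝ) (h : Vec → E) : ℝ :=
  sInf {c : ℝ | 0 ≤ c ∧ ∃ u : Vec → E, (∀ x ∈ bdry r₀, u x = h x) ∧
    IntegrableOn (fun x => ‖u x‖ ^ 2 + ‖fderiv ℝ u x‖ ^ 2) (annulus r₀) volume ∧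
    H1AnnNorm r₀ u ≤ c}

/-- `H^{1/2}(∂Σ)` membership for pairs. -/
def MemHHalfPair (r₀ : ℝ) (U : PairF) : Prop := MemHHalf r₀ U.1 ∧ MemHHalf r₀ U.2

/-- `H^{1/2}(∂Σ)` norm of a pair. -/
def hHalfNormPair (r₀ : ℝ) (U : PairF) : ℝ := hHalfNorm r₀ U.1 + hHalfNorm r₀ U.2

/-! ## Kernels of the boundary value problems -/

/-- The kernel of `P_{F,δ} = (P, B_ν + F) : H²_δ(Σ) → L²_{δ-2}(Σ) × H^{1/2}(∂Σ)`. -/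
def kerSet (g p : Vec → Mtx) (r₀ : ℝ) (F : EBdry) (δ : ℝ) : Set PairF :=
  {U | MemWPair g r₀ 2 δ U
    ∧ (∀ x ∈ Sig r₀, (Pop g p U).1 x = 0 ∧ ∀ i, (Pop g p U).2 x i = 0)
    ∧ (∀ x ∈ bdry r₀, (PBC g p F U).1 x = 0 ∧ ∀ i, (PBC g p F U).2 x i = 0)}

/-- The kernel of `P^*_{F,δ} = (P^*, B_ν^* + F^*)`. -/
def kerSetStar (g p : Vec → Mtx) (r₀ : ℝ) (F : EBdry) (δ : ℝ) : Set PairF :=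
  {U | MemWPair g r₀ 2 δ U
    ∧ (∀ x ∈ Sig r₀, (PopStar g p U).1 x = 0 ∧ ∀ i, (PopStar g p U).2 x i = 0)
    ∧ (∀ x ∈ bdry r₀, (PBCStar g p F U).1 x = 0 ∧ ∀ i, (PBCStar g p F U).2 x i = 0)}

/-- Dimension (as a cardinal) of the kernel of `P_{F,δ}`. -/
def kerRank (g p : Vec → Mtx) (r₀ : ℝ) (F : EBdry) (δ : ℝ) : Cardinal :=
  Module.rank ℝ (Submodule.span ℝ (kerSet g p r₀ F δ))

/-- Dimension (as a cardinal) of the kernel of `P^*_{F,δ}`. -/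
def kerRankStar (g p : Vec → Mtx) (r₀ : ℝ) (F : EBdry) (δ : ℝ) : Cardinal :=
  Module.rank ℝ (Submodule.span ℝ (kerSetStar g p r₀ F δ))


/-! ## Statement 6: Lemma 2.5, the linearized constraint operators -/

/-- Second covariant derivative `D_a D_b T_{ij}` of a 2-tensor. -/
def covD2T (g T : Vec → Mtx) (a b i j : Fin 3) (x : Vec) : ℝ :=
  pd a (fun y => covD g T b i j y) x
    - ∑ c, (Gam g c a b x * covD g T c i j x
        + Gam g c a i x * covD g T b c j x
        + Gam g c a j x * covD g T b i c x)

/-- The linearization `DH[g,π](h,ϖ)` (formula (2.7)). -/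
def DHlin (g p h ϖ : Vec → Mtx) (x : Vec) : ℝ :=
  -- `−Δ_g tr_g h + D^i D^j h_{ij} − h^{ij} Ric(g)_{ij}`
  - lapl g (fun y => trT g h y) x
    + (∑ i, ∑ j, ∑ a, ∑ b, minv (g x) i a * minv (g x) j b * covD2T g h a b i j x)
    - (∑ i, ∑ j, raise2 g h x i j * RicT g i j x)
  -- `+ tr_g π (tr_g ϖ − π^{ij} h_{ij}) − 2 π^{ij} ϖ_{ij} + 2 h^{ij} g^{kℓ} π_{ik} π_{jℓ}`
    + trT g p x * (trT g ϖ x - ∑ i, ∑ j, raise2 g p x i j * h x i j)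
    - 2 * (∑ i, ∑ j, raise2 g p x i j * ϖ x i j)
    + 2 * (∑ i, ∑ j, raise2 g h x i j * ∑ k, ∑ l, minv (g x) k l * p x i k * p x j l)

/-- The linearization `DM[g,π](h,ϖ)_i` (formula (2.8)). -/
def DMlin (g p h ϖ : Vec → Mtx) (i : Fin 3) (x : Vec) : ℝ :=
  -- `(div_g ϖ)_i − h^{kℓ} D_k π_{ℓi}`
  divT g ϖ i x - (∑ k, ∑ l, raise2 g h x k l * covD g p k l i x)
  -- `− π_i^j g^{kℓ} (D_k h_{ℓj} − ½ D_j h_{kℓ})`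
    - (∑ j, (∑ a, minv (g x) j a * p x i a) *
        ∑ k, ∑ l, minv (g x) k l * (covD g h k l j x - (1 / 2) * covD g h j k l x))
  -- `− ½ π^{kℓ} D_i h_{kℓ}`
    - (1 / 2) * (∑ k, ∑ l, raise2 g p x k l * covD g h i k l x)

/-!
The Christoffel symbols of `g + sh` differ from those of `g` exactly by `s` times the tensor
`½ (g + sh)^{kn} (D_i h_{nj} + D_j h_{ni} - D_n h_{ij})`. Both `Γ` and its spatial derivatives are
therefore of the form `c + s f(s)` near `s = 0` with `f` continuous at `0`, so that they can be
differentiated in `s` without interchanging derivatives in `s` and in `x`. The variation of the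
Ricci tensor is then a difference of two covariant divergences of this tensor (the Palatini
identity), and since raising an index and taking traces commute with `D`, its trace is
`-Δ_g tr_g h + D^i D^j h_{ij}`.
-/

open Topology

lemma hasDerivAt_const_add_id_mul (c : ℝ) {f : ℝ → ℝ} (hf : ContinuousAt f 0) :
    HasDerivAt (fun s => c + s * f s) (f 0) 0 := by
  have hslope : ∀ᶠ s in 𝓝[≠] (0 : ℝ), f s = slope (fun s => c + s * f s) 0 s := by
    filter_upwards [self_mem_nhdsWithin] with s hs
    have : s ≠ 0 := hs
    simp [slope_def_field, this]
  exact hasDerivAt_iff_tendsto_slope.2 ((hf.tendsto.mono_left nhdsWithin_le_nhds).congr' hslope)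

section MatrixInverse

open scoped Matrix.Norms.Operator

variable {E : Type*} [NormedAddCommGroup E] [NormedSpace ℝ E] {x : E}

lemma hasFDerivAt_matrix_inv {n : Type*} [Fintype n] [DecidableEq n] {A : E → Matrix n n ℝ}
    {A' : E →L[ℝ] Matrix n n ℝ} (hA : HasFDerivAt A A' x) (hx : IsUnit (A x)) :
    HasFDerivAt (fun y => (A y)⁻¹)
      ((-ContinuousLinearMap.mulLeftRight ℝ (Matrix n n ℝ) (A x)⁻¹ (A x)⁻¹).comp A') x := by
  have : CompleteSpace (Matrix n n ℝ) := inferInstanceAs (CompleteSpace (n → n → ℝ))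
  obtain ⟨u, hu⟩ := hx
  have hinv := hasFDerivAt_ringInverse (𝕜 := ℝ) u
  rw [hu, ← Ring.inverse_unit, hu, ← Matrix.nonsing_inv_eq_ringInverse] at hinv
  simp only [Matrix.nonsing_inv_eq_ringInverse] at hinv ⊢
  exact hinv.comp x hA

lemma hasFDerivAt_minv_apply {A : E → Mtx} {A' : E →L[ℝ] Mtx} (hA : HasFDerivAt A A' x)
    (hx : (Matrix.of (A x)).det ≠ 0) (i j : Fin 3) :
    HasFDerivAt (fun y => minv (A y) i j)
      (-∑ a, ∑ b, (minv (A x) i a * minv (A x) b j) •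
        (ContinuousLinearMap.proj b ∘L ContinuousLinearMap.proj a ∘L A')) x := by
  have hinv := hasFDerivAt_matrix_inv (A := fun y => Matrix.of (A y)) (A' := A') hA
    ((Matrix.isUnit_iff_isUnit_det _).2 hx.isUnit)
  refine (hasFDerivAt_pi'.1 (hasFDerivAt_pi'.1 hinv i) j).congr_fderiv ?_
  ext v
  change -((Matrix.of (A x))⁻¹ * Matrix.of (A' v) * (Matrix.of (A x))⁻¹) i j = _
  simp only [Matrix.mul_apply, sum_mul, Matrix.of_apply, minv, neg_apply, _root_.sum_apply,
    smul_apply, ContinuousLinearMap.comp_apply, ContinuousLinearMap.proj_apply, smul_eq_mul]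
  rw [sum_comm]
  exact congrArg _ (sum_congr rfl fun a _ => sum_congr rfl fun b _ => mul_right_comm _ _ _)

end MatrixInverse

lemma minv_symm {A : Mtx} (hA : ∀ i j, A i j = A j i) (i j : Fin 3) : minv A i j = minv A j i := by
  have hT : (Matrix.of A).transpose = Matrix.of A := Matrix.ext fun a b => hA b a
  calc minv A i j = (Matrix.of A).transpose⁻¹ i j := by rw [hT]; rfl
    _ = minv A j i := by rw [← Matrix.transpose_nonsing_inv]; rfl

lemma sum_minv_mul_sum {A : Mtx} (hA : (Matrix.of A).det ≠ 0) (v : Fin 3 → ℝ) (k : Fin 3) :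
    ∑ n, minv A k n * ∑ b, A n b * v b = v k := by
  have h := Matrix.mulVec_mulVec v (Matrix.of A)⁻¹ (Matrix.of A)
  rw [Matrix.nonsing_inv_mul _ hA.isUnit, Matrix.one_mulVec] at h
  exact congrFun h k

lemma sum_mul_sum_minv {A : Mtx} (hA : (Matrix.of A).det ≠ 0) (v : Fin 3 → ℝ) (k : Fin 3) :
    ∑ n, A k n * ∑ b, minv A n b * v b = v k := by
  have h := Matrix.mulVec_mulVec v (Matrix.of A) (Matrix.of A)⁻¹
  rw [Matrix.mul_nonsing_inv _ hA.isUnit, Matrix.one_mulVec] at h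
  exact congrFun h k

section Koszul

variable {ι : Type*}

/-- The Koszul combination `½ (E_{inj} + E_{jni} - E_{nij})`. Applied to the first partial
derivatives of a metric it gives its Christoffel symbols of the first kind, applied to the
covariant derivatives of `h` it gives the lowered variation of the Christoffel symbols. -/
def koszul (E : ι → ι → ι → ℝ) (n i j : ι) : ℝ :=
  (1 / 2) * (E i n j + E j n i - E n i j)

variable {E : ι → ι → ι → ℝ}

lemma koszul_swap (hE : ∀ k i j, E k i j = E k j i) (n i j : ι) :
    koszul E n i j = koszul E n j i := by
  rw [koszul, koszul, hE n i j, add_comm (E i n j)]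

lemma koszul_add_koszul (hE : ∀ k i j, E k i j = E k j i) (k i j : ι) :
    koszul E i k j + koszul E j k i = E k i j := by
  simp only [koszul, hE j k i, hE i k j, hE k j i]
  ring

end Koszul

section Contraction

variable {ι κ : Type*} [Fintype ι] [Fintype κ] {S : ι → ι → ℝ} {E : ι → ι → ι → ℝ}

lemma sum_mul_sum_mul_comm (v : ι → ℝ) (w : κ → ℝ) (A : ι → κ → ℝ) :
    ∑ i, v i * ∑ j, w j * A i j = ∑ j, w j * ∑ i, v i * A i j := by
  simp only [mul_sum]
  rw [sum_comm]
  simp only [mul_left_comm]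

lemma sum_mul_sum_sum_mul_comm (v : κ → ℝ) (S : ι → ι → ℝ) (A : κ → ι → ι → ℝ) :
    ∑ k, v k * ∑ i, ∑ j, S i j * A k i j = ∑ i, ∑ j, S i j * ∑ k, v k * A k i j := by
  simpa only [Fintype.sum_prod_type] using
    sum_mul_sum_mul_comm v (fun q : ι × ι => S q.1 q.2) fun k q => A k q.1 q.2

lemma sum_sum_mul_sum_sum_mul_comm (S : ι → ι → ℝ) (U : κ → κ → ℝ) (A : ι → ι → κ → κ → ℝ) :
    ∑ i, ∑ j, S i j * ∑ k, ∑ l, U k l * A i j k l =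
      ∑ k, ∑ l, U k l * ∑ i, ∑ j, S i j * A i j k l := by
  simpa only [Fintype.sum_prod_type] using
    sum_mul_sum_sum_mul_comm (fun p : ι × ι => S p.1 p.2) U fun p => A p.1 p.2

lemma sum_symm_mul_swap (hS : ∀ i j, S i j = S j i) (A : ι → ι → ℝ) :
    ∑ i, ∑ j, S i j * A i j = ∑ i, ∑ j, S i j * A j i := by
  rw [sum_comm]
  simp only [hS]

lemma sum_symm_mul_koszul_first (hS : ∀ i j, S i j = S j i) (hE : ∀ k i j, E k i j = E k j i)
    (i : ι) :
    ∑ k, ∑ n, S k n * koszul E n k i = (1 / 2) * ∑ k, ∑ n, S k n * E i k n := by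
  have hswap := sum_symm_mul_swap hS fun k n => E k n i
  simp only [koszul, mul_sum] at hswap ⊢
  calc _ = ∑ k, ∑ n, ((1 / 2) * (S k n * E k n i - S k n * E n k i) +
        (1 / 2) * (S k n * E i k n)) := by
        refine sum_congr rfl fun k _ => sum_congr rfl fun n _ => ?_
        rw [hE i n k]
        ring
    _ = _ := by
      simp only [sum_add_distrib, ← mul_sum, sum_sub_distrib, hswap, sub_self, mul_zero, zero_add]

lemma sum_symm_mul_koszul_last (hS : ∀ i j, S i j = S j i) (hE : ∀ k i j, E k i j = E k j i)
    (n : ι) :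
    ∑ k, ∑ l, S k l * koszul E n k l = ∑ k, ∑ l, S k l * (E k l n - (1 / 2) * E n k l) := by
  have hswap := sum_symm_mul_swap hS fun k l => E k l n
  calc _ = ∑ k, ∑ l, ((1 / 2) * (S k l * E k l n) + (1 / 2) * (S k l * E l k n)
        - S k l * ((1 / 2) * E n k l)) := by
        refine sum_congr rfl fun k _ => sum_congr rfl fun l _ => ?_
        rw [koszul, hE k n l, hE l n k]
        ring
    _ = _ := by
      simp only [mul_sub, sum_add_distrib, sum_sub_distrib, ← mul_sum, ← hswap]
      ring

lemma sum_symm_mul_sum_symm_mul {A : ι → ι → ι → ι → ℝ} (hS : ∀ i j, S i j = S j i)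
    (hA : ∀ a b i j, A a b i j = A a b j i) :
    ∑ a, ∑ i, S a i * ∑ b, ∑ j, S b j * A a b j i =
      ∑ i, ∑ j, ∑ a, ∑ b, S i a * S j b * A a b i j := by
  calc _ = ∑ a, ∑ i, ∑ b, ∑ j, S i a * S j b * A a b i j := by
        simp only [mul_sum]
        refine sum_congr rfl fun a _ => sum_congr rfl fun i _ => sum_congr rfl fun b _ =>
          sum_congr rfl fun j _ => ?_
        rw [hS a i, hS b j, hA, mul_assoc]
    _ = ∑ i, ∑ a, ∑ j, ∑ b, S i a * S j b * A a b i j := by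
        rw [sum_comm]
        exact sum_congr rfl fun i _ => sum_congr rfl fun a _ => sum_comm
    _ = _ := sum_congr rfl fun i _ => sum_comm

end Contraction

section PartialDerivative

variable {f f₁ f₂ : Vec → ℝ} {x : Vec} (k : Fin 3)

lemma pd_add (h₁ : DifferentiableAt ℝ f₁ x) (h₂ : DifferentiableAt ℝ f₂ x) :
    pd k (fun y => f₁ y + f₂ y) x = pd k f₁ x + pd k f₂ x := by
  simp [pd, fderiv_fun_add h₁ h₂]

lemma pd_sub (h₁ : DifferentiableAt ℝ f₁ x) (h₂ : DifferentiableAt ℝ f₂ x) :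
    pd k (fun y => f₁ y - f₂ y) x = pd k f₁ x - pd k f₂ x := by
  simp [pd, fderiv_fun_sub h₁ h₂]

lemma pd_mul (h₁ : DifferentiableAt ℝ f₁ x) (h₂ : DifferentiableAt ℝ f₂ x) :
    pd k (fun y => f₁ y * f₂ y) x = pd k f₁ x * f₂ x + f₁ x * pd k f₂ x := by
  simp only [pd, fderiv_fun_mul h₁ h₂, add_apply, smul_apply, smul_eq_mul]
  ring

lemma pd_const_mul (c : ℝ) (h : DifferentiableAt ℝ f x) :
    pd k (fun y => c * f y) x = c * pd k f x := by
  simp [pd, fderiv_const_mul h]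

lemma pd_sum {ι : Type*} {s : Finset ι} {F : ι → Vec → ℝ}
    (hF : ∀ a ∈ s, DifferentiableAt ℝ (F a) x) :
    pd k (fun y => ∑ a ∈ s, F a y) x = ∑ a ∈ s, pd k (F a) x := by
  simp [pd, fderiv_fun_sum hF]

lemma pd_congr (h : f₁ =ᶠ[𝓝 x] f₂) : pd k f₁ x = pd k f₂ x := by
  rw [pd, pd, h.fderiv_eq]

lemma differentiable_pd (hf : ContDiff ℝ 2 f) : Differentiable ℝ (pd k f) :=
  ((hf.fderiv_right (m := 1) (by norm_num)).differentiable one_ne_zero).clm_apply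
    (differentiable_const _)

end PartialDerivative

section Christoffel

variable {g h T : Vec → Mtx} {x : Vec}

lemma pd_apply_swap (hT : ∀ x i j, T x i j = T x j i) (k i j : Fin 3) (x : Vec) :
    pd k (fun y => T y i j) x = pd k (fun y => T y j i) x :=
  congrArg (pd k · x) (funext fun y => hT y i j)

/-- The Christoffel symbols of the first kind `Γ_{nij}` of `g`. -/
def christoffelLow (g : Vec → Mtx) (n i j : Fin 3) (x : Vec) : ℝ :=
  koszul (fun k a b => pd k (fun y => g y a b) x) n i j

lemma pd_eq_christoffelLow_add (hgs : ∀ x i j, g x i j = g x j i) (k i j : Fin 3) (x : Vec) :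
    pd k (fun y => g y i j) x = christoffelLow g i k j x + christoffelLow g j k i x :=
  (koszul_add_koszul (fun k a b => pd_apply_swap hgs k a b x) k i j).symm

lemma pd_apply_add_smul (hg : Differentiable ℝ g) (hh : Differentiable ℝ h) (s : ℝ)
    (k i j : Fin 3) (x : Vec) :
    pd k (fun y => (g + s • h) y i j) x =
      pd k (fun y => g y i j) x + s * pd k (fun y => h y i j) x := by
  rw [← pd_const_mul _ _ (by fun_prop), ← pd_add _ (by fun_prop) (by fun_prop)]
  rfl

lemma christoffelLow_add_smul (hg : Differentiable ℝ g) (hh : Differentiable ℝ h) (s : ℝ)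
    (n i j : Fin 3) (x : Vec) :
    christoffelLow (g + s • h) n i j x =
      christoffelLow g n i j x + s * christoffelLow h n i j x := by
  simp only [christoffelLow, koszul, pd_apply_add_smul hg hh]
  ring

lemma Gam_eq_sum_minv_mul (g : Vec → Mtx) (k i j : Fin 3) (x : Vec) :
    Gam g k i j x = ∑ n, minv (g x) k n * christoffelLow g n i j x := by
  simp only [Gam, christoffelLow, koszul, mul_sum, mul_left_comm]

lemma Gam_swap (hgs : ∀ x i j, g x i j = g x j i) (k i j : Fin 3) (x : Vec) :
    Gam g k i j x = Gam g k j i x := by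
  simp only [Gam_eq_sum_minv_mul, christoffelLow,
    koszul_swap (fun k a b => pd_apply_swap hgs k a b x) _ i j]

lemma sum_mul_Gam (hx : (Matrix.of (g x)).det ≠ 0) (n i j : Fin 3) :
    ∑ k, g x n k * Gam g k i j x = christoffelLow g n i j x := by
  simp only [Gam_eq_sum_minv_mul]
  exact sum_mul_sum_minv hx (christoffelLow g · i j x) n

lemma differentiableAt_minv (hg : Differentiable ℝ g) (hx : (Matrix.of (g x)).det ≠ 0)
    (i j : Fin 3) : DifferentiableAt ℝ (fun y => minv (g y) i j) x :=
  (hasFDerivAt_minv_apply (hg x).hasFDerivAt hx i j).differentiableAt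

lemma pd_minv_eq_neg_sum (hg : Differentiable ℝ g) (hx : (Matrix.of (g x)).det ≠ 0)
    (k i j : Fin 3) :
    pd k (fun y => minv (g y) i j) x =
      -∑ a, ∑ b, minv (g x) i a * minv (g x) b j * pd k (fun y => g y a b) x := by
  have happly (a b : Fin 3) :
      fderiv ℝ (fun y => g y a b) x (Pi.single k 1) = fderiv ℝ g x (Pi.single k 1) a b := by
    have hab := hasFDerivAt_pi'.1 (hasFDerivAt_pi'.1 (hg x).hasFDerivAt a) b
    rw [hab.fderiv]
    rfl
  simp only [pd, (hasFDerivAt_minv_apply (hg x).hasFDerivAt hx i j).fderiv, happly, neg_apply,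
    _root_.sum_apply, smul_apply, ContinuousLinearMap.comp_apply, ContinuousLinearMap.proj_apply,
    smul_eq_mul]

lemma pd_minv (hg : Differentiable ℝ g) (hgs : ∀ x i j, g x i j = g x j i)
    (hx : (Matrix.of (g x)).det ≠ 0) (k i j : Fin 3) :
    pd k (fun y => minv (g y) i j) x =
      -∑ l, (Gam g i k l x * minv (g x) l j + Gam g j k l x * minv (g x) i l) := by
  have hfirst : ∑ a, ∑ b, minv (g x) i a * minv (g x) b j * christoffelLow g a k b x =
      ∑ l, Gam g i k l x * minv (g x) l j := by
    rw [sum_comm]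
    simp only [Gam_eq_sum_minv_mul, sum_mul, mul_right_comm]
  have hsecond : ∑ a, ∑ b, minv (g x) i a * minv (g x) b j * christoffelLow g b k a x =
      ∑ l, Gam g j k l x * minv (g x) i l := by
    simp only [Gam_eq_sum_minv_mul, sum_mul]
    exact sum_congr rfl fun a _ => sum_congr rfl fun b _ => by rw [minv_symm (hgs x) j]; ring
  simp only [pd_minv_eq_neg_sum hg hx, pd_eq_christoffelLow_add hgs, mul_add, sum_add_distrib,
    hfirst, hsecond]

lemma differentiableAt_Gam (hg : ContDiff ℝ 2 g) (hx : (Matrix.of (g x)).det ≠ 0)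
    (k i j : Fin 3) : DifferentiableAt ℝ (Gam g k i j) x := by
  have hpd (k a b : Fin 3) : Differentiable ℝ (pd k fun y => g y a b) :=
    differentiable_pd k (by fun_prop)
  have hinv := differentiableAt_minv (hg.differentiable two_ne_zero) hx
  unfold Gam
  fun_prop

lemma pd_raise (hg : Differentiable ℝ g) (hgs : ∀ x i j, g x i j = g x j i)
    (hx : (Matrix.of (g x)).det ≠ 0) {V : Fin 3 → Vec → ℝ}
    (hV : ∀ n, DifferentiableAt ℝ (V n) x) (m k : Fin 3) :
    pd m (fun y => ∑ n, minv (g y) k n * V n y) x =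
      ∑ n, minv (g x) k n * (pd m (V n) x - ∑ l, Gam g l m n x * V l x) -
        ∑ l, Gam g k m l x * ∑ n, minv (g x) l n * V n x := by
  have hinv := differentiableAt_minv hg hx
  rw [pd_sum m fun n _ => by fun_prop]
  simp only [pd_mul m (hinv k _) (hV _), pd_minv hg hgs hx]
  have hfirst : ∑ n, (∑ l, Gam g k m l x * minv (g x) l n) * V n x =
      ∑ l, Gam g k m l x * ∑ n, minv (g x) l n * V n x := by
    simp only [sum_mul, mul_sum, mul_assoc]
    exact sum_comm
  have hsecond : ∑ n, (∑ l, Gam g n m l x * minv (g x) k l) * V n x =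
      ∑ n, minv (g x) k n * ∑ l, Gam g l m n x * V l x := by
    simp only [sum_mul, mul_sum]
    rw [sum_comm]
    exact sum_congr rfl fun _ _ => sum_congr rfl fun _ _ => by ring
  simp only [mul_sub, sum_sub_distrib, sum_add_distrib, ← hfirst, ← hsecond, neg_mul, add_mul,
    sum_neg_distrib]
  ring

lemma pd_contract (hg : Differentiable ℝ g) (hgs : ∀ x i j, g x i j = g x j i)
    (hx : (Matrix.of (g x)).det ≠ 0) {W : Fin 3 → Fin 3 → Vec → ℝ}
    (hW : ∀ i j, DifferentiableAt ℝ (W i j) x) (k : Fin 3) :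
    pd k (fun y => ∑ i, ∑ j, minv (g y) i j * W i j y) x =
      ∑ i, ∑ j, minv (g x) i j *
        (pd k (W i j) x - ∑ l, (Gam g l k i x * W l j x + Gam g l k j x * W i l x)) := by
  have hinv := differentiableAt_minv hg hx
  rw [pd_sum k fun i _ => by fun_prop]
  simp only [pd_raise hg hgs hx (hW _), sum_add_distrib, mul_sub, mul_add, sum_sub_distrib]
  have hswap : ∑ i, ∑ l, Gam g i k l x * ∑ j, minv (g x) l j * W i j x =
      ∑ i, ∑ j, minv (g x) i j * ∑ l, Gam g l k i x * W l j x := by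
    simp only [mul_sum]
    rw [sum_comm]
    refine sum_congr rfl fun l _ => ?_
    rw [sum_comm]
    simp only [mul_left_comm]
  rw [hswap]
  ring

end Christoffel

section CovariantDerivative

variable {g h T : Vec → Mtx} {x : Vec}

lemma covD_swap (hT : ∀ x i j, T x i j = T x j i) (g : Vec → Mtx) (k i j : Fin 3) (x : Vec) :
    covD g T k i j x = covD g T k j i x := by
  simp only [covD, pd_apply_swap hT k i j, hT x _ i, hT x _ j, add_comm]

lemma differentiableAt_covD (hg : ContDiff ℝ 2 g) (hx : (Matrix.of (g x)).det ≠ 0)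
    (hT : ContDiff ℝ 2 T) (k i j : Fin 3) : DifferentiableAt ℝ (covD g T k i j) x := by
  have hΓ := differentiableAt_Gam hg hx
  have hpd : Differentiable ℝ (pd k fun y => T y i j) := differentiable_pd k (by fun_prop)
  have hd := hT.differentiable two_ne_zero
  unfold covD
  fun_prop

/-- The covariant derivative `D_m L_{nij}` of a covariant 3-tensor `L`. -/
def covD3 (g : Vec → Mtx) (L : Fin 3 → Fin 3 → Fin 3 → Vec → ℝ) (m n i j : Fin 3) (x : Vec) : ℝ :=
  pd m (L n i j) x -
    ∑ c, (Gam g c m n x * L c i j x + Gam g c m i x * L n c j x + Gam g c m j x * L n i c x)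

lemma covD3_koszul (g : Vec → Mtx) {E : Fin 3 → Fin 3 → Fin 3 → Vec → ℝ}
    (hE : ∀ k i j, DifferentiableAt ℝ (E k i j) x) (m n i j : Fin 3) :
    covD3 g (fun n i j y => koszul (E · · · y) n i j) m n i j x =
      koszul (covD3 g E m · · · x) n i j := by
  simp only [covD3, koszul]
  rw [pd_const_mul m _ (by fun_prop), pd_sub m (by fun_prop) (by fun_prop),
    pd_add m (by fun_prop) (by fun_prop)]
  simp only [Fin.sum_univ_three]
  ring

lemma covD2T_swap (hT : ∀ x i j, T x i j = T x j i) (g : Vec → Mtx) (a b i j : Fin 3) (x : Vec) :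
    covD2T g T a b i j x = covD2T g T a b j i x := by
  have hfun : covD g T b i j = covD g T b j i := funext (covD_swap hT g b i j)
  rw [covD2T, covD2T, hfun]
  congr 1
  refine sum_congr rfl fun c _ => ?_
  rw [covD_swap hT g c i j, covD_swap hT g b c j, covD_swap hT g b i c]
  ring

/-- The covariant derivative `D_m C^k_{ij}` of a tensor `C` with one upper and two lower
indices. -/
def covDMixed (g : Vec → Mtx) (C : Fin 3 → Fin 3 → Fin 3 → Vec → ℝ) (m k i j : Fin 3)
    (x : Vec) : ℝ :=
  pd m (C k i j) x +
    ∑ c, (Gam g k m c x * C c i j x - Gam g c m i x * C k c j x - Gam g c m j x * C k i c x)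

lemma covDMixed_raise (hg : Differentiable ℝ g) (hgs : ∀ x i j, g x i j = g x j i)
    (hx : (Matrix.of (g x)).det ≠ 0) {L : Fin 3 → Fin 3 → Fin 3 → Vec → ℝ}
    (hL : ∀ n i j, DifferentiableAt ℝ (L n i j) x) (m k i j : Fin 3) :
    covDMixed g (fun k i j y => ∑ n, minv (g y) k n * L n i j y) m k i j x =
      ∑ n, minv (g x) k n * covD3 g L m n i j x := by
  simp only [covDMixed, covD3, pd_raise hg hgs hx (hL · i j), sum_add_distrib, sum_sub_distrib,
    mul_sub, mul_add, sum_mul_sum_mul_comm (Gam g · m i x), sum_mul_sum_mul_comm (Gam g · m j x)]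
  ring

lemma pd_trT (hg : Differentiable ℝ g) (hgs : ∀ x i j, g x i j = g x j i)
    (hx : (Matrix.of (g x)).det ≠ 0) (hT : Differentiable ℝ T) (k : Fin 3) :
    pd k (trT g T) x = ∑ i, ∑ j, minv (g x) i j * covD g T k i j x :=
  pd_contract hg hgs hx (W := fun i j y => T y i j) (by fun_prop) k

lemma hessian_trT (hg : ContDiff ℝ 2 g) (hgs : ∀ x i j, g x i j = g x j i)
    (hdet : ∀ x, (Matrix.of (g x)).det ≠ 0) (hT : ContDiff ℝ 2 T) (i j : Fin 3) :
    pd i (pd j (trT g T)) x - ∑ k, Gam g k i j x * pd k (trT g T) x =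
      ∑ a, ∑ b, minv (g x) a b * covD2T g T i j a b x := by
  have hg₁ := hg.differentiable two_ne_zero
  have hpd (k : Fin 3) : pd k (trT g T) = fun y => ∑ a, ∑ b, minv (g y) a b * covD g T k a b y :=
    funext fun y => pd_trT hg₁ hgs (hdet y) (hT.differentiable two_ne_zero) k
  have hΓ : ∑ k, Gam g k i j x * pd k (trT g T) x =
      ∑ a, ∑ b, minv (g x) a b * ∑ k, Gam g k i j x * covD g T k a b x := by
    simp only [hpd, sum_mul_sum_sum_mul_comm]
  rw [hΓ, hpd j, pd_contract hg₁ hgs (hdet x) (differentiableAt_covD hg (hdet x) hT j) i]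
  simp only [covD2T, ← sum_sub_distrib, ← mul_sub, sum_add_distrib]
  refine sum_congr rfl fun a _ => sum_congr rfl fun b _ => ?_
  ring

lemma lapl_trT (hg : ContDiff ℝ 2 g) (hgs : ∀ x i j, g x i j = g x j i)
    (hdet : ∀ x, (Matrix.of (g x)).det ≠ 0) (hT : ContDiff ℝ 2 T) :
    lapl g (trT g T) x =
      ∑ i, ∑ j, minv (g x) i j * ∑ a, ∑ b, minv (g x) a b * covD2T g T i j a b x := by
  simp only [lapl, ← hessian_trT hg hgs hdet hT]

end CovariantDerivative

section Variation

variable {g h : Vec → Mtx} {x : Vec}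

/-- The lowered variation `½ (D_i h_{nj} + D_j h_{ni} - D_n h_{ij})` of the Christoffel symbols
of `g` in direction `h`. -/
def varChristoffelLow (g h : Vec → Mtx) (n i j : Fin 3) (x : Vec) : ℝ :=
  koszul (covD g h · · · x) n i j

/-- The tensor `varChristoffelLow g h` with its first index raised by a second metric `G`. For
`G = g` it is the derivative of the Christoffel symbols of `g` in direction `h`; for
`G = g + s • h` it is their difference quotient, see `Gam_add_smul`. -/
def varChristoffel (G g h : Vec → Mtx) (k i j : Fin 3) (x : Vec) : ℝ :=
  ∑ n, minv (G x) k n * varChristoffelLow g h n i j x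

lemma varChristoffelLow_swap (hhs : ∀ x i j, h x i j = h x j i) (g : Vec → Mtx)
    (n i j : Fin 3) (x : Vec) : varChristoffelLow g h n i j x = varChristoffelLow g h n j i x :=
  koszul_swap (covD_swap hhs g · · · x) n i j

lemma varChristoffel_swap (hhs : ∀ x i j, h x i j = h x j i) (G g : Vec → Mtx)
    (k i j : Fin 3) (x : Vec) : varChristoffel G g h k i j x = varChristoffel G g h k j i x := by
  simp only [varChristoffel, varChristoffelLow_swap hhs g _ i j]

lemma christoffelLow_eq_varChristoffelLow_add (hgs : ∀ x i j, g x i j = g x j i)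
    (hhs : ∀ x i j, h x i j = h x j i) (n i j : Fin 3) (x : Vec) :
    christoffelLow h n i j x = varChristoffelLow g h n i j x + ∑ b, h x n b * Gam g b i j x := by
  simp only [varChristoffelLow, christoffelLow, koszul, covD, sum_add_distrib, Gam_swap hgs _ n i,
    Gam_swap hgs _ n j, Gam_swap hgs _ j i, hhs x i, mul_comm (h x n _)]
  ring

lemma Gam_add_smul (hg : Differentiable ℝ g) (hh : Differentiable ℝ h)
    (hgs : ∀ x i j, g x i j = g x j i) (hhs : ∀ x i j, h x i j = h x j i)
    (hx : (Matrix.of (g x)).det ≠ 0) {s : ℝ} (hsx : (Matrix.of ((g + s • h) x)).det ≠ 0)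
    (k i j : Fin 3) :
    Gam (g + s • h) k i j x = Gam g k i j x + s * varChristoffel (g + s • h) g h k i j x := by
  have hlow (n : Fin 3) : christoffelLow (g + s • h) n i j x =
      ∑ b, (g + s • h) x n b * Gam g b i j x + s * varChristoffelLow g h n i j x := by
    simp only [christoffelLow_add_smul hg hh, ← sum_mul_Gam hx,
      christoffelLow_eq_varChristoffelLow_add hgs hhs, Pi.add_apply, Pi.smul_apply, smul_eq_mul,
      add_mul, sum_add_distrib, mul_assoc, ← mul_sum]
    ring
  simp only [Gam_eq_sum_minv_mul (g + s • h), hlow, mul_add, sum_add_distrib, varChristoffel,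
    mul_sum]
  rw [← sum_minv_mul_sum hsx (Gam g · i j x) k]
  simp only [mul_sum, mul_left_comm]

lemma eventually_det_add_smul_ne_zero (hx : (Matrix.of (g x)).det ≠ 0) (h : Vec → Mtx) :
    ∀ᶠ s in 𝓝 (0 : ℝ), (Matrix.of ((g + s • h) x)).det ≠ 0 := by
  have hcont : Continuous fun s : ℝ => (Matrix.of ((g + s • h) x)).det :=
    Continuous.matrix_det (by simp only [Pi.add_apply, Pi.smul_apply]; fun_prop)
  exact hcont.continuousAt.eventually_ne (by simpa using hx)

lemma eventually_det_ne_zero (hg : Continuous g) (hx : (Matrix.of (g x)).det ≠ 0) :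
    ∀ᶠ y in 𝓝 x, (Matrix.of (g y)).det ≠ 0 :=
  (Continuous.matrix_det hg).continuousAt.eventually_ne hx

lemma hasDerivAt_minv (hgs : ∀ x i j, g x i j = g x j i) (hx : (Matrix.of (g x)).det ≠ 0)
    (h : Vec → Mtx) (i j : Fin 3) :
    HasDerivAt (fun s : ℝ => minv ((g + s • h) x) i j) (-raise2 g h x i j) 0 := by
  have hA : HasDerivAt (fun s : ℝ => (g + s • h) x) (h x) 0 := by
    simpa using ((hasDerivAt_id (0 : ℝ)).smul_const (h x)).const_add (g x)
  have hdet : (Matrix.of ((g + (0 : ℝ) • h) x)).det ≠ 0 := by simpa using hx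
  refine (hasFDerivAt_minv_apply hA.hasFDerivAt hdet i j).hasDerivAt.congr_deriv ?_
  simp [raise2, minv_symm (hgs x) j]

lemma continuousAt_varChristoffel (hgs : ∀ x i j, g x i j = g x j i)
    (hx : (Matrix.of (g x)).det ≠ 0) (h : Vec → Mtx) (k i j : Fin 3) :
    ContinuousAt (fun s : ℝ => varChristoffel (g + s • h) g h k i j x) 0 := by
  have hinv (a b : Fin 3) := (hasDerivAt_minv hgs hx h a b).continuousAt
  unfold varChristoffel
  fun_prop

lemma hasDerivAt_Gam (hg : Differentiable ℝ g) (hh : Differentiable ℝ h)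
    (hgs : ∀ x i j, g x i j = g x j i) (hhs : ∀ x i j, h x i j = h x j i)
    (hx : (Matrix.of (g x)).det ≠ 0) (k i j : Fin 3) :
    HasDerivAt (fun s : ℝ => Gam (g + s • h) k i j x) (varChristoffel g g h k i j x) 0 := by
  have hderiv := hasDerivAt_const_add_id_mul (Gam g k i j x)
    (continuousAt_varChristoffel hgs hx h k i j)
  simp only [zero_smul, add_zero] at hderiv
  exact hderiv.congr_of_eventuallyEq ((eventually_det_add_smul_ne_zero hx h).mono fun s hs =>
    Gam_add_smul hg hh hgs hhs hx hs k i j)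

lemma differentiableAt_varChristoffelLow (hg : ContDiff ℝ 2 g) (hh : ContDiff ℝ 2 h)
    (hx : (Matrix.of (g x)).det ≠ 0) (n i j : Fin 3) :
    DifferentiableAt ℝ (varChristoffelLow g h n i j) x := by
  have hD := differentiableAt_covD hg hx hh
  unfold varChristoffelLow koszul
  fun_prop

lemma differentiableAt_varChristoffel {G : Vec → Mtx} (hG : Differentiable ℝ G)
    (hGx : (Matrix.of (G x)).det ≠ 0) (hg : ContDiff ℝ 2 g) (hh : ContDiff ℝ 2 h)
    (hx : (Matrix.of (g x)).det ≠ 0) (k i j : Fin 3) :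
    DifferentiableAt ℝ (varChristoffel G g h k i j) x := by
  have hminv := differentiableAt_minv hG hGx
  have hK := differentiableAt_varChristoffelLow hg hh hx
  unfold varChristoffel
  fun_prop

lemma pd_varChristoffel {G : Vec → Mtx} (hG : Differentiable ℝ G)
    (hGx : (Matrix.of (G x)).det ≠ 0) (hg : ContDiff ℝ 2 g) (hh : ContDiff ℝ 2 h)
    (hx : (Matrix.of (g x)).det ≠ 0) (m k i j : Fin 3) :
    pd m (varChristoffel G g h k i j) x =
      ∑ n, ((-∑ a, ∑ b, minv (G x) k a * minv (G x) b n * pd m (fun y => G y a b) x) *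
          varChristoffelLow g h n i j x +
        minv (G x) k n * pd m (varChristoffelLow g h n i j) x) := by
  have hminv := differentiableAt_minv hG hGx
  have hK := differentiableAt_varChristoffelLow hg hh hx
  unfold varChristoffel
  rw [pd_sum m fun n _ => by fun_prop]
  simp only [pd_mul m (hminv k _) (hK _ i j), pd_minv_eq_neg_sum hG hGx]

lemma continuousAt_pd_varChristoffel (hg : ContDiff ℝ 2 g) (hh : ContDiff ℝ 2 h)
    (hgs : ∀ x i j, g x i j = g x j i) (hx : (Matrix.of (g x)).det ≠ 0) (m k i j : Fin 3) :
    ContinuousAt (fun s : ℝ => pd m (varChristoffel (g + s • h) g h k i j) x) 0 := by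
  have hg₁ := hg.differentiable two_ne_zero
  have hh₁ := hh.differentiable two_ne_zero
  have hinv (a b : Fin 3) := (hasDerivAt_minv hgs hx h a b).continuousAt
  have hformula := (eventually_det_add_smul_ne_zero hx h).mono fun s hs =>
    (pd_varChristoffel (by fun_prop) hs hg hh hx m k i j).symm
  refine ContinuousAt.congr ?_ hformula
  simp only [pd_apply_add_smul hg₁ hh₁]
  fun_prop

lemma hasDerivAt_pd_Gam (hg : ContDiff ℝ 2 g) (hh : ContDiff ℝ 2 h)
    (hgs : ∀ x i j, g x i j = g x j i) (hhs : ∀ x i j, h x i j = h x j i)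
    (hx : (Matrix.of (g x)).det ≠ 0) (m k i j : Fin 3) :
    HasDerivAt (fun s : ℝ => pd m (Gam (g + s • h) k i j) x)
      (pd m (varChristoffel g g h k i j) x) 0 := by
  have hg₁ := hg.differentiable two_ne_zero
  have hh₁ := hh.differentiable two_ne_zero
  have hderiv := hasDerivAt_const_add_id_mul (pd m (Gam g k i j) x)
    (continuousAt_pd_varChristoffel hg hh hgs hx m k i j)
  simp only [zero_smul, add_zero] at hderiv
  refine hderiv.congr_of_eventuallyEq ?_
  filter_upwards [eventually_det_add_smul_ne_zero hx h] with s hs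
  have hgh : Differentiable ℝ (g + s • h) := by fun_prop
  have hC := differentiableAt_varChristoffel hgh hs hg hh hx k i j
  have hGam : Gam (g + s • h) k i j =ᶠ[𝓝 x]
      fun y => Gam g k i j y + s * varChristoffel (g + s • h) g h k i j y := by
    filter_upwards [eventually_det_ne_zero hg.continuous hx,
      eventually_det_ne_zero hgh.continuous hs] with y hy hsy
    exact Gam_add_smul hg₁ hh₁ hgs hhs hy hsy k i j
  rw [pd_congr m hGam, pd_add m (differentiableAt_Gam hg hx k i j) (hC.const_mul s),
    pd_const_mul m s hC]

end Variation

section Palatini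

variable {g h : Vec → Mtx} {x : Vec}

lemma hasDerivAt_RicT (hg : ContDiff ℝ 2 g) (hh : ContDiff ℝ 2 h)
    (hgs : ∀ x i j, g x i j = g x j i) (hhs : ∀ x i j, h x i j = h x j i)
    (hx : (Matrix.of (g x)).det ≠ 0) (i j : Fin 3) :
    HasDerivAt (fun s : ℝ => RicT (g + s • h) i j x)
      (∑ k, covDMixed g (varChristoffel g g h) k k i j x -
        ∑ k, covDMixed g (varChristoffel g g h) j k k i x) 0 := by
  have hpd (m k a b : Fin 3) := hasDerivAt_pd_Gam hg hh hgs hhs hx m k a b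
  have hΓ (k a b : Fin 3) := hasDerivAt_Gam (hg.differentiable two_ne_zero)
    (hh.differentiable two_ne_zero) hgs hhs hx k a b
  have hquad : HasDerivAt (fun s : ℝ => ∑ k, ∑ l, (Gam (g + s • h) k k l x * Gam (g + s • h) l i j x
      - Gam (g + s • h) k j l x * Gam (g + s • h) l k i x)) _ 0 :=
    .fun_sum fun k _ => .fun_sum fun l _ =>
      ((hΓ k k l).mul (hΓ l i j)).sub ((hΓ k j l).mul (hΓ l k i))
  refine (((HasDerivAt.fun_sum fun k _ => hpd k k i j).sub
    (HasDerivAt.fun_sum fun k _ => hpd j k k i)).add hquad).congr_deriv ?_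
  simp only [zero_smul, add_zero, covDMixed, ← sum_sub_distrib, ← sum_add_distrib]
  refine sum_congr rfl fun k _ => ?_
  rw [add_sub_add_comm, ← sum_sub_distrib]
  congr 1
  refine sum_congr rfl fun l _ => ?_
  rw [Gam_swap hgs l j i, Gam_swap hgs l j k, varChristoffel_swap hhs g g k j l,
    varChristoffel_swap hhs g g k i l, varChristoffel_swap hhs g g l k i]
  ring

lemma covDMixed_varChristoffel (hg : ContDiff ℝ 2 g) (hh : ContDiff ℝ 2 h)
    (hgs : ∀ x i j, g x i j = g x j i) (hx : (Matrix.of (g x)).det ≠ 0) (m k i j : Fin 3) :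
    covDMixed g (varChristoffel g g h) m k i j x =
      ∑ n, minv (g x) k n * koszul (covD2T g h m · · · x) n i j := by
  refine (covDMixed_raise (hg.differentiable two_ne_zero) hgs hx
    (differentiableAt_varChristoffelLow hg hh hx) m k i j).trans (sum_congr rfl fun n _ => ?_)
  exact congrArg _ (covD3_koszul g (differentiableAt_covD hg hx hh) m n i j)

lemma sum_minv_mul_palatini (hg : ContDiff ℝ 2 g) (hh : ContDiff ℝ 2 h)
    (hgs : ∀ x i j, g x i j = g x j i) (hhs : ∀ x i j, h x i j = h x j i)
    (hdet : ∀ x, (Matrix.of (g x)).det ≠ 0) :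
    ∑ i, ∑ j, minv (g x) i j * (∑ k, covDMixed g (varChristoffel g g h) k k i j x -
        ∑ k, covDMixed g (varChristoffel g g h) j k k i x) =
      -lapl g (trT g h) x +
        ∑ i, ∑ j, ∑ a, ∑ b, minv (g x) i a * minv (g x) j b * covD2T g h a b i j x := by
  have hu := minv_symm (hgs x)
  have hH (m k i j : Fin 3) : covD2T g h m k i j x = covD2T g h m k j i x :=
    covD2T_swap hhs g m k i j x
  have hfirst : ∑ i, ∑ j, minv (g x) i j *
        ∑ k, covDMixed g (varChristoffel g g h) k k i j x =
      (∑ i, ∑ j, ∑ a, ∑ b, minv (g x) i a * minv (g x) j b * covD2T g h a b i j x) -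
        (1 / 2) * lapl g (trT g h) x := by
    simp only [covDMixed_varChristoffel hg hh hgs (hdet x)]
    rw [sum_sum_mul_sum_sum_mul_comm, ← sum_symm_mul_sum_symm_mul hu hH, lapl_trT hg hgs hdet hh]
    simp only [sum_symm_mul_koszul_last hu (hH _), mul_sub, sum_sub_distrib, mul_sum, mul_left_comm]
  have hsecond : ∑ i, ∑ j, minv (g x) i j *
        ∑ k, covDMixed g (varChristoffel g g h) j k k i x =
      (1 / 2) * lapl g (trT g h) x := by
    simp only [covDMixed_varChristoffel hg hh hgs (hdet x),
      sum_symm_mul_koszul_first hu (hH _), lapl_trT hg hgs hdet hh]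
    rw [sum_symm_mul_swap hu]
    simp only [mul_sum, mul_left_comm]
  simp only [mul_sub, sum_sub_distrib, hfirst, hsecond]
  ring

lemma hasDerivAt_scalR (hg : ContDiff ℝ 2 g) (hh : ContDiff ℝ 2 h)
    (hgs : ∀ x i j, g x i j = g x j i) (hhs : ∀ x i j, h x i j = h x j i)
    (hdet : ∀ x, (Matrix.of (g x)).det ≠ 0) :
    HasDerivAt (fun s : ℝ => scalR (g + s • h) x)
      (-lapl g (trT g h) x +
        ∑ i, ∑ j, ∑ a, ∑ b, minv (g x) i a * minv (g x) j b * covD2T g h a b i j x -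
        ∑ i, ∑ j, raise2 g h x i j * RicT g i j x) 0 := by
  have hprod := HasDerivAt.fun_sum (u := univ) fun i _ => HasDerivAt.fun_sum (u := univ)
    fun j _ => (hasDerivAt_minv hgs (hdet x) h i j).mul (hasDerivAt_RicT hg hh hgs hhs (hdet x) i j)
  refine hprod.congr_deriv ?_
  simp only [zero_smul, add_zero, sum_add_distrib, sum_minv_mul_palatini hg hh hgs hhs hdet,
    neg_mul, sum_neg_distrib]
  ring

end Palatini

section Contractions

variable {g h p ϖ T : Vec → Mtx} {x : Vec}

lemma raise2_swap (hT : ∀ x i j, T x i j = T x j i) (g : Vec → Mtx) (x : Vec) (i j : Fin 3) :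
    raise2 g T x i j = raise2 g T x j i := by
  rw [raise2, sum_comm]
  simp only [hT x _, mul_comm (minv (g x) i _), raise2]

lemma sum_raise2_mul_comm (hgs : ∀ x i j, g x i j = g x j i) (S T : Vec → Mtx) (x : Vec) :
    ∑ i, ∑ j, raise2 g S x i j * T x i j = ∑ i, ∑ j, raise2 g T x i j * S x i j := by
  have hraise (T : Vec → Mtx) (i j : Fin 3) :
      raise2 g T x i j = ∑ a, ∑ b, T x a b * (minv (g x) i a * minv (g x) j b) := by
    simp only [raise2, mul_comm (T x _ _)]
  calc _ = ∑ i, ∑ j, T x i j * raise2 g S x i j := by simp only [mul_comm (T x _ _)]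
    _ = ∑ a, ∑ b, S x a b * ∑ i, ∑ j, T x i j * (minv (g x) i a * minv (g x) j b) := by
      simp only [hraise]
      exact sum_sum_mul_sum_sum_mul_comm _ _ _
    _ = _ := by simp only [hraise, minv_symm (hgs x) _ _, mul_comm (S x _ _)]

lemma hasDerivAt_apply_add_smul (T S : Vec → Mtx) (x : Vec) (i j : Fin 3) :
    HasDerivAt (fun s : ℝ => (T + s • S) x i j) (S x i j) 0 := by
  simpa using ((hasDerivAt_id (0 : ℝ)).mul_const (S x i j)).const_add (T x i j)

lemma hasDerivAt_trT (hgs : ∀ x i j, g x i j = g x j i) (hx : (Matrix.of (g x)).det ≠ 0)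
    (h p ϖ : Vec → Mtx) :
    HasDerivAt (fun s : ℝ => trT (g + s • h) (p + s • ϖ) x)
      (trT g ϖ x - ∑ i, ∑ j, raise2 g p x i j * h x i j) 0 := by
  have hprod := HasDerivAt.fun_sum (u := univ) fun i _ => HasDerivAt.fun_sum (u := univ)
    fun j _ => (hasDerivAt_minv hgs hx h i j).mul (hasDerivAt_apply_add_smul p ϖ x i j)
  refine hprod.congr_deriv ?_
  simp only [zero_smul, add_zero, sum_add_distrib, neg_mul, sum_neg_distrib,
    sum_raise2_mul_comm hgs h p x, trT]
  ring

lemma hasDerivAt_normSqT (hgs : ∀ x i j, g x i j = g x j i) (hps : ∀ x i j, p x i j = p x j i)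
    (hx : (Matrix.of (g x)).det ≠ 0) (h ϖ : Vec → Mtx) :
    HasDerivAt (fun s : ℝ => normSqT (g + s • h) (p + s • ϖ) x)
      (2 * (∑ i, ∑ j, raise2 g p x i j * ϖ x i j) -
        2 * (∑ i, ∑ j, raise2 g h x i j * ∑ k, ∑ l, minv (g x) k l * p x i k * p x j l)) 0 := by
  have hu (i j : Fin 3) := hasDerivAt_minv hgs hx h i j
  have hT (i j : Fin 3) := hasDerivAt_apply_add_smul p ϖ x i j
  have hprod := HasDerivAt.fun_sum (u := univ) fun i _ => HasDerivAt.fun_sum (u := univ)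
    fun j _ => HasDerivAt.fun_sum (u := univ) fun k _ => HasDerivAt.fun_sum (u := univ)
    fun l _ => (((hu i k).fun_mul (hu j l)).fun_mul (hT i j)).fun_mul (hT k l)
  have hfirst : ∑ i, ∑ j, ∑ k, ∑ l, raise2 g h x i k * minv (g x) j l * p x i j * p x k l =
      ∑ i, ∑ j, raise2 g h x i j * ∑ k, ∑ l, minv (g x) k l * p x i k * p x j l := by
    refine sum_congr rfl fun i _ => sum_comm.trans ?_
    simp only [mul_sum, mul_assoc]
  have hsecond : ∑ i, ∑ j, ∑ k, ∑ l, minv (g x) i k * raise2 g h x j l * p x i j * p x k l =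
      ∑ i, ∑ j, raise2 g h x i j * ∑ k, ∑ l, minv (g x) k l * p x i k * p x j l := by
    calc _ = ∑ i, ∑ k, minv (g x) i k * ∑ j, ∑ l, raise2 g h x j l * (p x i j * p x k l) := by
          refine sum_congr rfl fun i _ => sum_comm.trans ?_
          simp only [mul_sum, mul_assoc]
      _ = ∑ j, ∑ l, raise2 g h x j l * ∑ i, ∑ k, minv (g x) i k * (p x i j * p x k l) :=
        sum_sum_mul_sum_sum_mul_comm _ _ _
      _ = _ := by simp only [mul_assoc, hps x _ _]
  have hthird : ∑ i, ∑ j, ∑ k, ∑ l, minv (g x) i k * minv (g x) j l * ϖ x i j * p x k l =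
      ∑ i, ∑ j, raise2 g p x i j * ϖ x i j := by
    simp only [raise2, sum_mul, mul_right_comm _ (ϖ x _ _)]
  have hfourth : ∑ i, ∑ j, ∑ k, ∑ l, minv (g x) i k * minv (g x) j l * p x i j * ϖ x k l =
      ∑ i, ∑ j, raise2 g p x i j * ϖ x i j := by
    rw [sum_raise2_mul_comm hgs]
    simp only [raise2, sum_mul, mul_right_comm _ (p x _ _)]
  refine hprod.congr_deriv ?_
  simp only [zero_smul, add_zero, add_mul, neg_mul, mul_neg, sum_add_distrib, sum_neg_distrib,
    hfirst, hsecond, hthird, hfourth]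
  ring

lemma hasDerivAt_Hc (hg : ContDiff ℝ 2 g) (hh : ContDiff ℝ 2 h)
    (hgs : ∀ x i j, g x i j = g x j i) (hps : ∀ x i j, p x i j = p x j i)
    (hhs : ∀ x i j, h x i j = h x j i) (hdet : ∀ x, (Matrix.of (g x)).det ≠ 0)
    (ϖ : Vec → Mtx) (x : Vec) :
    HasDerivAt (fun s : ℝ => Hc (g + s • h) (p + s • ϖ) x) (DHlin g p h ϖ x) 0 := by
  refine (((hasDerivAt_scalR hg hh hgs hhs hdet).add
    (((hasDerivAt_trT hgs (hdet x) h p ϖ).pow 2).const_mul (1 / 2))).sub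
    (hasDerivAt_normSqT hgs hps (hdet x) h ϖ)).congr_deriv ?_
  simp only [zero_smul, add_zero, DHlin]
  ring

lemma hasDerivAt_covD (hg : Differentiable ℝ g) (hh : Differentiable ℝ h)
    (hp : Differentiable ℝ p) (hϖ : Differentiable ℝ ϖ)
    (hgs : ∀ x i j, g x i j = g x j i) (hhs : ∀ x i j, h x i j = h x j i)
    (hx : (Matrix.of (g x)).det ≠ 0) (k i j : Fin 3) :
    HasDerivAt (fun s : ℝ => covD (g + s • h) (p + s • ϖ) k i j x)
      (covD g ϖ k i j x - ∑ c, (varChristoffel g g h c k i x * p x c j +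
        varChristoffel g g h c k j x * p x i c)) 0 := by
  have hΓ (k i j : Fin 3) := hasDerivAt_Gam hg hh hgs hhs hx k i j
  have hT (i j : Fin 3) := hasDerivAt_apply_add_smul p ϖ x i j
  have hpd : HasDerivAt (fun s : ℝ => pd k (fun y => (p + s • ϖ) y i j) x)
      (pd k (fun y => ϖ y i j) x) 0 := by
    simp only [pd_apply_add_smul hp hϖ]
    simpa using ((hasDerivAt_id (0 : ℝ)).mul_const _).const_add (pd k (fun y => p y i j) x)
  refine (hpd.sub (HasDerivAt.fun_sum fun c _ =>
    ((hΓ c k i).mul (hT c j)).add ((hΓ c k j).mul (hT i c)))).congr_deriv ?_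
  simp only [zero_smul, add_zero, covD, sum_add_distrib]
  ring

lemma sum_minv_mul_varChristoffel_mul_left (hgs : ∀ x i j, g x i j = g x j i)
    (hps : ∀ x i j, p x i j = p x j i) (hhs : ∀ x i j, h x i j = h x j i) (i : Fin 3) :
    ∑ k, ∑ l, minv (g x) k l * ∑ c, varChristoffel g g h c k l x * p x c i =
      ∑ j, (∑ a, minv (g x) j a * p x i a) *
        ∑ k, ∑ l, minv (g x) k l * (covD g h k l j x - (1 / 2) * covD g h j k l x) := by
  have hraise (k l : Fin 3) : ∑ c, varChristoffel g g h c k l x * p x c i =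
      ∑ j, (∑ a, minv (g x) j a * p x i a) * varChristoffelLow g h j k l x := by
    simp only [varChristoffel, sum_mul]
    rw [sum_comm]
    refine sum_congr rfl fun j _ => sum_congr rfl fun a _ => ?_
    rw [minv_symm (hgs x) a j, hps x a i, mul_right_comm]
  simp only [hraise, ← sum_mul_sum_sum_mul_comm, varChristoffelLow,
    sum_symm_mul_koszul_last (minv_symm (hgs x)) (covD_swap hhs g · · · x)]

lemma sum_minv_mul_varChristoffel_mul_right (hgs : ∀ x i j, g x i j = g x j i)
    (hps : ∀ x i j, p x i j = p x j i) (hhs : ∀ x i j, h x i j = h x j i) (i : Fin 3) :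
    ∑ k, ∑ l, minv (g x) k l * ∑ c, varChristoffel g g h c k i x * p x l c =
      (1 / 2) * ∑ k, ∑ l, raise2 g p x k l * covD g h i k l x := by
  rw [← sum_symm_mul_koszul_first (raise2_swap hps g x) (covD_swap hhs g · · · x)]
  refine sum_congr rfl fun k _ => ?_
  calc _ = ∑ l, ∑ c, ∑ n,
        minv (g x) k l * minv (g x) n c * p x l c * varChristoffelLow g h n k i x := by
        simp only [varChristoffel, mul_sum, sum_mul]
        refine sum_congr rfl fun l _ => sum_congr rfl fun c _ => sum_congr rfl fun n _ => ?_
        rw [minv_symm (hgs x) c n]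
        ring
    _ = ∑ n, ∑ l, ∑ c,
        minv (g x) k l * minv (g x) n c * p x l c * varChristoffelLow g h n k i x :=
        (sum_congr rfl fun l _ => sum_comm).trans sum_comm
    _ = ∑ n, raise2 g p x k n * varChristoffelLow g h n k i x := by
        simp only [raise2, sum_mul]

lemma hasDerivAt_divT (hg : Differentiable ℝ g) (hh : Differentiable ℝ h)
    (hp : Differentiable ℝ p) (hϖ : Differentiable ℝ ϖ)
    (hgs : ∀ x i j, g x i j = g x j i) (hps : ∀ x i j, p x i j = p x j i)
    (hhs : ∀ x i j, h x i j = h x j i) (hx : (Matrix.of (g x)).det ≠ 0) (i : Fin 3) :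
    HasDerivAt (fun s : ℝ => divT (g + s • h) (p + s • ϖ) i x) (DMlin g p h ϖ i x) 0 := by
  have hprod := HasDerivAt.fun_sum (u := univ) fun k _ => HasDerivAt.fun_sum (u := univ)
    fun l _ => (hasDerivAt_minv hgs hx h k l).mul (hasDerivAt_covD hg hh hp hϖ hgs hhs hx k l i)
  refine hprod.congr_deriv ?_
  simp only [zero_smul, add_zero, mul_sub, sum_add_distrib, sum_sub_distrib, mul_add,
    sum_minv_mul_varChristoffel_mul_left hgs hps hhs,
    sum_minv_mul_varChristoffel_mul_right hgs hps hhs, neg_mul, sum_neg_distrib, DMlin, divT]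
  ring

end Contractions

theorem linearized_constraints_general (g p h ϖ : Vec → Mtx)
    (hg : ContDiff ℝ 2 g) (hp : Differentiable ℝ p) (hh : ContDiff ℝ 2 h)
    (hϖ : Differentiable ℝ ϖ)
    (hgs : ∀ x i j, g x i j = g x j i) (hps : ∀ x i j, p x i j = p x j i)
    (hhs : ∀ x i j, h x i j = h x j i) (hdet : ∀ x, (Matrix.of (g x)).det ≠ 0) (x : Vec) :
    HasDerivAt (fun s : ℝ => Hc (g + s • h) (p + s • ϖ) x) (DHlin g p h ϖ x) 0 ∧
      ∀ i, HasDerivAt (fun s : ℝ => divT (g + s • h) (p + s • ϖ) i x) (DMlin g p h ϖ i x) 0 :=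
  ⟨hasDerivAt_Hc hg hh hgs hps hhs hdet ϖ x, hasDerivAt_divT (hg.differentiable two_ne_zero)
    (hh.differentiable two_ne_zero) hp hϖ hgs hps hhs (hdet x)⟩

/-- **Lemma 2.5.**  For smooth `g, π, h, ϖ` with `g` a Riemannian metric,
the derivatives at `s = 0` of `s ↦ H(g+sh, π+sϖ)` and `s ↦ M(g+sh, π+sϖ)` are given by
the formulas `DH[g,π](h,ϖ)` and `DM[g,π](h,ϖ)` above. -/
theorem linearized_constraints
    (g p h ϖ : Vec → Mtx)
    (hg : ContDiff ℝ (⊤ : ℕ∞) g) (hp : ContDiff ℝ (⊤ : ℕ∞) p)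
    (hh : ContDiff ℝ (⊤ : ℕ∞) h) (hϖ : ContDiff ℝ (⊤ : ℕ∞) ϖ)
    (hgs : ∀ x i j, g x i j = g x j i) (hps : ∀ x i j, p x i j = p x j i)
    (hhs : ∀ x i j, h x i j = h x j i) (hϖs : ∀ x i j, ϖ x i j = ϖ x j i)
    (hgpos : ∀ x, (Matrix.of (g x)).PosDef) :
    ∀ x : Vec,
      HasDerivAt
        (fun s : ℝ => Hc (fun y a b => g y a b + s * h y a b)
          (fun y a b => p y a b + s * ϖ y a b) x)
        (DHlin g p h ϖ x) 0 ∧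
      ∀ i : Fin 3,
        HasDerivAt
          (fun s : ℝ => divT (fun y a b => g y a b + s * h y a b)
            (fun y a b => p y a b + s * ϖ y a b) i x)
          (DMlin g p h ϖ i x) 0 :=
  linearized_constraints_general g p h ϖ (contDiff_infty.1 hg 2) (hp.differentiable (by simp))
    (contDiff_infty.1 hh 2) (hϖ.differentiable (by simp)) hgs hps hhs
    fun x => (hgpos x).det_pos.ne'

end
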